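/- arXiv:1201.4296 — 7 statements merged into one kernel-verified Lean document; each statement's English description precedes it below -/
import Mathlib

section
/- Let a ∈ R \ {0} and let 𝓡 ⊆ R be a transversal for R/aR. Then the operators U^b e_a U^{-b}, for b ∈ 𝓡, are pairwise orthogonal projections on ℓ²(R) and Σ_{b ∈ 𝓡} U^b e_a U^{-b} = 1 (the identity operator). -/
open NumberField
open scoped Classical

/-!
Since `U⁻ᵇ = (Uᵇ)*`, the operator `Uᵇ e_a U⁻ᵇ` is `T_b T_b*` for `T_b = Uᵇ S_a`, which maps `ε_r` to
`ε_{b+ar}`. Injectivity of `r ↦ b + ar` makes `T_b` an isometry, disjointness of the cosets `b + aR`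
gives `T_b* T_c = 0` for `b ≠ c`, and since the cosets cover `R`, every basis vector lies in the
range of some `T_b`. The projections `T_b T_b*` are therefore orthogonal with sum `1`.
-/

open scoped InnerProduct InnerProductSpace

section HilbertBasis

variable {𝕜 ι κ E F G : Type*} [RCLike 𝕜]
  [NormedAddCommGroup E] [InnerProductSpace 𝕜 E]
  [NormedAddCommGroup F] [InnerProductSpace 𝕜 F]
  [NormedAddCommGroup G] [InnerProductSpace 𝕜 G]

theorem continuousLinearMap_ext_hilbertBasis {M : Type*} [AddCommMonoid M] [Module 𝕜 M]
    [TopologicalSpace M] [T2Space M] (e : HilbertBasis ι 𝕜 E) {A B : E →L[𝕜] M}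
    (h : ∀ i, A (e i) = B (e i)) : A = B :=
  ContinuousLinearMap.ext_on
    (Submodule.dense_iff_topologicalClosure_eq_top.mpr e.dense_span) (Set.forall_mem_range.mpr h)

theorem continuousLinearMap_ext_inner_hilbertBasis (e : HilbertBasis ι 𝕜 E)
    (e' : HilbertBasis κ 𝕜 F) {A B : E →L[𝕜] F}
    (h : ∀ k i, ⟪e' k, A (e i)⟫_𝕜 = ⟪e' k, B (e i)⟫_𝕜) : A = B := by
  refine continuousLinearMap_ext_hilbertBasis e fun i => e'.repr.injective ?_
  ext k
  simpa only [e'.repr_apply_apply] using h k i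

variable [CompleteSpace E] [CompleteSpace G]

theorem adjoint_comp_self_eq_one_of_orthonormal (e : HilbertBasis ι 𝕜 E) {T : E →L[𝕜] G}
    (hT : Orthonormal 𝕜 fun i => T (e i)) : T† ∘L T = 1 := by
  refine continuousLinearMap_ext_inner_hilbertBasis e e fun k i => ?_
  rw [ContinuousLinearMap.comp_apply, ContinuousLinearMap.adjoint_inner_right,
    orthonormal_iff_ite.mp hT, one_apply_eq_self, orthonormal_iff_ite.mp e.orthonormal]

theorem adjoint_comp_eq_zero_of_inner_eq_zero (e : HilbertBasis ι 𝕜 E) (e' : HilbertBasis κ 𝕜 F)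
    {T : E →L[𝕜] G} {V : F →L[𝕜] G} (h : ∀ i k, ⟪T (e i), V (e' k)⟫_𝕜 = 0) : T† ∘L V = 0 := by
  refine continuousLinearMap_ext_inner_hilbertBasis e' e fun i k => ?_
  rw [ContinuousLinearMap.comp_apply, ContinuousLinearMap.adjoint_inner_right, h,
    zero_apply, inner_zero_right]

theorem adjoint_eq_of_apply_equiv (e : HilbertBasis ι 𝕜 E) (e' : HilbertBasis κ 𝕜 G) (σ : ι ≃ κ)
    {T : E →L[𝕜] G} {V : G →L[𝕜] E} (hT : ∀ i, T (e i) = e' (σ i))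
    (hV : ∀ i, V (e' (σ i)) = e i) : T† = V := by
  have hiso : T† ∘L T = 1 := adjoint_comp_self_eq_one_of_orthonormal e <| by
    simp only [hT]
    exact e'.orthonormal.comp σ σ.injective
  refine continuousLinearMap_ext_hilbertBasis e' (σ.forall_congr_right.mp fun i => ?_)
  rw [hV, ← hT, ← ContinuousLinearMap.comp_apply, hiso, one_apply_eq_self]

theorem adjoint_translation [AddGroup ι] (e : HilbertBasis ι 𝕜 E) {U : ι → E →L[𝕜] E}
    (hU : ∀ b i, U b (e i) = e (b + i)) (b : ι) : (U b)† = U (-b) :=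
  adjoint_eq_of_apply_equiv e e (Equiv.addLeft b) (hU b) fun i => by
    rw [hU, Equiv.coe_addLeft, neg_add_cancel_left]

end HilbertBasis

section RangeProjections

variable {𝕜 ι κ E F G : Type*} [RCLike 𝕜]
  [NormedAddCommGroup E] [InnerProductSpace 𝕜 E] [CompleteSpace E]
  [NormedAddCommGroup F] [InnerProductSpace 𝕜 F] [CompleteSpace F]
  [NormedAddCommGroup G] [InnerProductSpace 𝕜 G] [CompleteSpace G]

theorem isStarProjection_comp_adjoint {T : E →L[𝕜] F} (hT : T† ∘L T = 1) :
    IsStarProjection (T ∘L T†) where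
  isIdempotentElem := calc
    T ∘L T† ∘L T ∘L T† = T ∘L (T† ∘L T) ∘L T† := rfl
    _ = T ∘L T† := by rw [hT]; rfl
  isSelfAdjoint := by
    rw [ContinuousLinearMap.isSelfAdjoint_iff', ContinuousLinearMap.adjoint_comp,
      ContinuousLinearMap.adjoint_adjoint]

theorem comp_adjoint_comp_comp_adjoint_eq_zero {T : E →L[𝕜] G} {V : F →L[𝕜] G}
    (h : T† ∘L V = 0) : (T ∘L T†) ∘L (V ∘L V†) = 0 := calc
  (T ∘L T†) ∘L (V ∘L V†) = T ∘L (T† ∘L V) ∘L V† := rfl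
  _ = 0 := by rw [h, ContinuousLinearMap.zero_comp, ContinuousLinearMap.comp_zero]

theorem sum_comp_adjoint_eq_one (e : HilbertBasis κ 𝕜 F) {s : Finset ι} {T : ι → E →L[𝕜] F}
    (hiso : ∀ i ∈ s, (T i)† ∘L T i = 1)
    (horth : (s : Set ι).Pairwise fun i j => (T i)† ∘L T j = 0)
    (hcover : ∀ k, ∃ i ∈ s, ∃ x, T i x = e k) : ∑ i ∈ s, T i ∘L (T i)† = 1 := by
  refine continuousLinearMap_ext_hilbertBasis e fun k => ?_
  obtain ⟨i, hi, x, hx⟩ := hcover k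
  have hself : ((T i)†) (T i x) = x := DFunLike.congr_fun (hiso i hi) x
  have hother : ∀ j ∈ s, j ≠ i → ((T j)†) (T i x) = 0 := fun j hj hji =>
    DFunLike.congr_fun (horth hj hi hji) x
  calc (∑ j ∈ s, T j ∘L (T j)†) (e k)
      = ∑ j ∈ s, T j (((T j)†) (T i x)) := by
        simp only [sum_apply, ContinuousLinearMap.comp_apply, hx]
    _ = T i (((T i)†) (T i x)) :=
        Finset.sum_eq_single_of_mem i hi fun j hj hji => by rw [hother j hj hji, map_zero]
    _ = e k := by rw [hself, hx]

end RangeProjections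

section Transversal

variable {𝕜 R E : Type*} [RCLike 𝕜] [Ring R]
  [NormedAddCommGroup E] [InnerProductSpace 𝕜 E] [CompleteSpace E]

theorem eq_of_add_mul_eq_add_mul {a : R} {𝓡 : Set R}
    (h𝓡 : ∀ r, ∃! b, b ∈ 𝓡 ∧ a ∣ r - b) {b c r s : R} (hb : b ∈ 𝓡) (hc : c ∈ 𝓡)
    (h : b + a * r = c + a * s) : b = c :=
  (h𝓡 (b + a * r)).unique ⟨hb, by simp⟩ ⟨hc, by simp [h]⟩

theorem stmt1_general (e : HilbertBasis R 𝕜 E) {U : R → E →L[𝕜] E} {S : E →L[𝕜] E} {a : R}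
    (hU : ∀ b r, U b (e r) = e (b + r)) (hS : ∀ r, S (e r) = e (a * r)) (ha : IsLeftRegular a)
    {𝓡 : Finset R} (h𝓡 : ∀ r, ∃! b, b ∈ 𝓡 ∧ a ∣ r - b) :
    (∀ b ∈ 𝓡, IsStarProjection (U b ∘L (S ∘L S†) ∘L U (-b))) ∧
    (∀ b ∈ 𝓡, ∀ c ∈ 𝓡, b ≠ c →
      (U b ∘L (S ∘L S†) ∘L U (-b)) ∘L (U c ∘L (S ∘L S†) ∘L U (-c)) = 0) ∧
    ∑ b ∈ 𝓡, U b ∘L (S ∘L S†) ∘L U (-b) = 1 := by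
  let T b := U b ∘L S
  have hT : ∀ b r, T b (e r) = e (b + a * r) := fun b r => by
    rw [ContinuousLinearMap.comp_apply, hS, hU]
  have hconj : ∀ b, U b ∘L (S ∘L S†) ∘L U (-b) = T b ∘L (T b)† := fun b => by
    rw [ContinuousLinearMap.adjoint_comp, adjoint_translation e hU]; rfl
  have hiso : ∀ b, (T b)† ∘L T b = 1 := fun b => by
    refine adjoint_comp_self_eq_one_of_orthonormal e ?_
    simp only [hT]
    exact e.orthonormal.comp _ ((add_right_injective b).comp ha)
  have horth : (𝓡 : Set R).Pairwise fun b c => (T b)† ∘L T c = 0 := fun b hb c hc hbc => by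
    refine adjoint_comp_eq_zero_of_inner_eq_zero e e fun r s => ?_
    rw [hT, hT]
    exact e.orthonormal.inner_eq_zero (hbc ∘ eq_of_add_mul_eq_add_mul h𝓡 hb hc)
  have hcover : ∀ r, ∃ b ∈ 𝓡, ∃ x, T b x = e r := fun r => by
    obtain ⟨b, ⟨hb, q, hq⟩, -⟩ := h𝓡 r
    exact ⟨b, hb, e q, by rw [hT, ← hq, add_sub_cancel]⟩
  simp only [hconj]
  exact ⟨fun b _ => isStarProjection_comp_adjoint (hiso b),
    fun b hb c hc hbc => comp_adjoint_comp_comp_adjoint_eq_zero (horth hb hc hbc),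
    sum_comp_adjoint_eq_one e (fun b _ => hiso b) horth hcover⟩

end Transversal

/-- The canonical orthonormal basis `(ε_i)` of `ℓ²(ι)`, where `ε_i = lp.single 2 i 1`; it carries
statements about abstract Hilbert bases over to operators on `ℓ²(ι)`. -/
noncomputable def standardHilbertBasis (𝕜 ι : Type*) [RCLike 𝕜] :
    HilbertBasis ι 𝕜 (lp (fun _ : ι => 𝕜) 2) :=
  .ofRepr (.refl 𝕜 _)

theorem standardHilbertBasis_apply {𝕜 ι : Type*} [RCLike 𝕜] [DecidableEq ι] (i : ι) :
    standardHilbertBasis 𝕜 ι i = lp.single 2 i (1 : 𝕜) :=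
  ((standardHilbertBasis 𝕜 ι).repr_symm_single i).symm

/-- Let `a ∈ R \ {0}` and let `𝓡 ⊆ R` be a transversal for `R/aR` (a finite set containing
exactly one representative of each coset of the ideal `aR`).  Then the operators
`U^b e_a U^{-b}` (`b ∈ 𝓡`), where `e_a = S_a S_a*`, are pairwise orthogonal projections on
`ℓ²(R)` whose sum is the identity operator.  Here `U` and `S` are the families of bounded
operators on `ℓ²(R)` determined on the canonical orthonormal basis by `U^b ε_r = ε_{b+r}`
and `S_a ε_r = ε_{ar}`. -/
theorem stmt1 (K : Type*) [Field K] [NumberField K]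
    (U S : 𝓞 K → (lp (fun _ : 𝓞 K => ℂ) 2 →L[ℂ] lp (fun _ : 𝓞 K => ℂ) 2))
    (hU : ∀ b r : 𝓞 K, U b (lp.single 2 r (1 : ℂ)) = lp.single 2 (b + r) (1 : ℂ))
    (hS : ∀ a : 𝓞 K, a ≠ 0 → ∀ r : 𝓞 K,
      S a (lp.single 2 r (1 : ℂ)) = lp.single 2 (a * r) (1 : ℂ))
    (a : 𝓞 K) (ha : a ≠ 0)
    (𝓡 : Finset (𝓞 K)) (h𝓡 : ∀ r : 𝓞 K, ∃! b, b ∈ 𝓡 ∧ a ∣ (r - b)) :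
    (∀ b ∈ 𝓡,
      ContinuousLinearMap.adjoint
          ((U b).comp (((S a).comp (ContinuousLinearMap.adjoint (S a))).comp (U (-b)))) =
        (U b).comp (((S a).comp (ContinuousLinearMap.adjoint (S a))).comp (U (-b))) ∧
      ((U b).comp (((S a).comp (ContinuousLinearMap.adjoint (S a))).comp (U (-b)))).comp
          ((U b).comp (((S a).comp (ContinuousLinearMap.adjoint (S a))).comp (U (-b)))) =
        (U b).comp (((S a).comp (ContinuousLinearMap.adjoint (S a))).comp (U (-b)))) ∧
    (∀ b ∈ 𝓡, ∀ b' ∈ 𝓡, b ≠ b' →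
      ((U b).comp (((S a).comp (ContinuousLinearMap.adjoint (S a))).comp (U (-b)))).comp
          ((U b').comp (((S a).comp (ContinuousLinearMap.adjoint (S a))).comp (U (-b')))) = 0) ∧
    ∑ b ∈ 𝓡, (U b).comp (((S a).comp (ContinuousLinearMap.adjoint (S a))).comp (U (-b))) =
      ContinuousLinearMap.id ℂ (lp (fun _ : 𝓞 K => ℂ) 2) := by
  obtain ⟨hproj, horth, hsum⟩ := stmt1_general (standardHilbertBasis ℂ (𝓞 K))
    (by simpa only [standardHilbertBasis_apply] using hU)
    (by simpa only [standardHilbertBasis_apply] using hS a ha) (mul_right_injective₀ ha) h𝓡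
  exact ⟨fun b hb => ⟨(hproj b hb).isSelfAdjoint, (hproj b hb).isIdempotentElem⟩, horth, hsum⟩
end

section
/- Let a, c ∈ R \ {0} and let 𝓡 ⊆ R be a transversal for R/cR. Then e_a = Σ_{b ∈ 𝓡} U^{ab} e_{ac} U^{-ab} as operators on ℓ²(R). -/
open NumberField
open scoped Classical

/-!
If `T ε_i = ε_{φ i}` with `φ` injective, then `T T*` is the projection onto the coordinates in the
range of `φ`. So `e_a` is the projection onto the coordinates in `aR`, and `U^{ab} e_{ac} U^{-ab}`
is the one onto those in `ab + acR`. As `b` runs over a transversal for `R/cR`, the sets `ab + acR`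
partition `aR`.
-/

open scoped lp

section CoordinateProjection

variable {ι κ 𝕜 : Type*} [DecidableEq ι] [DecidableEq κ] [RCLike 𝕜]

/-- `P` is the orthogonal projection of `ℓ²(ι, 𝕜)` onto the closed span of the basis vectors indexed
by `s`. It is described by its values on the basis, which determine a bounded operator. -/
def IsCoordProj (P : ℓ²(ι, 𝕜) →L[𝕜] ℓ²(ι, 𝕜)) (s : Set ι) : Prop :=
  ∀ i, P (lp.single 2 i 1) = s.indicator (fun j => lp.single 2 j 1) i

namespace IsCoordProj

theorem unique {P Q : ℓ²(ι, 𝕜) →L[𝕜] ℓ²(ι, 𝕜)} {s : Set ι}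
    (hP : IsCoordProj P s) (hQ : IsCoordProj Q s) : P = Q := by
  refine lp.ext_continuousLinearMap ENNReal.ofNat_ne_top fun i => ?_
  ext1
  simpa using (hP i).trans (hQ i).symm

theorem conj {P : ℓ²(ι, 𝕜) →L[𝕜] ℓ²(ι, 𝕜)} {s : Set ι} (hP : IsCoordProj P s) (σ : ι ≃ κ)
    {W : ℓ²(ι, 𝕜) →L[𝕜] ℓ²(κ, 𝕜)} {V : ℓ²(κ, 𝕜) →L[𝕜] ℓ²(ι, 𝕜)}
    (hW : ∀ i, W (lp.single 2 i 1) = lp.single 2 (σ i) 1)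
    (hV : ∀ k, V (lp.single 2 k 1) = lp.single 2 (σ.symm k) 1) :
    IsCoordProj (W.comp (P.comp V)) (σ '' s) := by
  intro k
  rw [ContinuousLinearMap.comp_apply, ContinuousLinearMap.comp_apply, hV, hP]
  by_cases hk : σ.symm k ∈ s
  · rw [Set.indicator_of_mem hk, Set.indicator_of_mem (Set.mem_image_equiv.2 hk), hW,
      σ.apply_symm_apply]
  · rw [Set.indicator_of_notMem hk, Set.indicator_of_notMem (mt Set.mem_image_equiv.1 hk),
      map_zero]

theorem sum {α : Type*} {t : Finset α} {P : α → ℓ²(ι, 𝕜) →L[𝕜] ℓ²(ι, 𝕜)} {s : α → Set ι}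
    (hP : ∀ b ∈ t, IsCoordProj (P b) (s b)) (hs : (t : Set α).PairwiseDisjoint s) :
    IsCoordProj (∑ b ∈ t, P b) (⋃ b ∈ t, s b) := by
  intro i
  rw [sum_apply, Finset.indicator_biUnion_apply t s hs]
  exact Finset.sum_congr rfl fun b hb => hP b hb i

end IsCoordProj

section Adjoint

variable {T : ℓ²(ι, 𝕜) →L[𝕜] ℓ²(κ, 𝕜)} {φ : ι → κ}

theorem adjoint_single_apply (hT : ∀ i, T (lp.single 2 i 1) = lp.single 2 (φ i) 1)
    (k : κ) (i : ι) :
    ContinuousLinearMap.adjoint T (lp.single 2 k 1) i = if φ i = k then 1 else 0 :=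
  calc ContinuousLinearMap.adjoint T (lp.single 2 k 1) i
      = inner 𝕜 (lp.single 2 i (1 : 𝕜)) (ContinuousLinearMap.adjoint T (lp.single 2 k 1)) := by
        simp [lp.inner_single_left]
    _ = inner 𝕜 (lp.single 2 (φ i) (1 : 𝕜)) (lp.single 2 k (1 : 𝕜)) := by
        rw [ContinuousLinearMap.adjoint_inner_right, hT]
    _ = if φ i = k then 1 else 0 := by
        simp [lp.inner_single_left, Pi.single_apply]

theorem adjoint_single_of_injective (hφ : Function.Injective φ)
    (hT : ∀ i, T (lp.single 2 i 1) = lp.single 2 (φ i) 1) (i : ι) :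
    ContinuousLinearMap.adjoint T (lp.single 2 (φ i) 1) = lp.single 2 i 1 := by
  ext j
  rw [adjoint_single_apply hT, lp.single_apply, Pi.single_apply]
  simp only [hφ.eq_iff]

theorem adjoint_single_of_notMem_range
    (hT : ∀ i, T (lp.single 2 i 1) = lp.single 2 (φ i) 1) {k : κ} (hk : k ∉ Set.range φ) :
    ContinuousLinearMap.adjoint T (lp.single 2 k 1) = 0 := by
  ext i
  rw [adjoint_single_apply hT, if_neg fun h => hk ⟨i, h⟩, lp.coeFn_zero, Pi.zero_apply]

theorem isCoordProj_comp_adjoint (hφ : Function.Injective φ)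
    (hT : ∀ i, T (lp.single 2 i 1) = lp.single 2 (φ i) 1) :
    IsCoordProj (T.comp (ContinuousLinearMap.adjoint T)) (Set.range φ) := by
  intro k
  rw [ContinuousLinearMap.comp_apply]
  by_cases hk : k ∈ Set.range φ
  · obtain ⟨i, rfl⟩ := hk
    rw [Set.indicator_of_mem (Set.mem_range_self i), adjoint_single_of_injective hφ hT, hT]
  · rw [Set.indicator_of_notMem hk, adjoint_single_of_notMem_range hT hk, map_zero]

end Adjoint

end CoordinateProjection

section Transversal

variable {R : Type*} [Ring R]

theorem add_left_image_range_mul_left (a b c : R) :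
    (a * b + ·) '' Set.range (a * c * ·) = (a * ·) '' {r | c ∣ r - b} := by
  have hcoset : {r | c ∣ r - b} = Set.range (b + c * ·) := by
    ext r
    simp only [Set.mem_ofPred_eq, Set.mem_range, dvd_iff_exists_eq_mul_right, sub_eq_iff_eq_add',
      @eq_comm _ r]
  rw [hcoset, ← Set.range_comp, ← Set.range_comp]
  simp only [Function.comp_def, mul_add, mul_assoc]

theorem biUnion_add_left_image_range_mul_left (a : R) {c : R} {s : Set R}
    (hs : ∀ r, ∃ b ∈ s, c ∣ r - b) :
    ⋃ b ∈ s, (a * b + ·) '' Set.range (a * c * ·) = Set.range (a * ·) := by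
  have hcover : ⋃ b ∈ s, {r | c ∣ r - b} = Set.univ :=
    Set.eq_univ_of_forall fun r => by simpa using hs r
  simp only [add_left_image_range_mul_left]
  rw [← Set.image_iUnion₂, hcover, Set.image_univ]

theorem pairwiseDisjoint_add_left_image_range_mul_left {a c : R} {s : Set R}
    (ha : IsLeftRegular a) (hs : ∀ r, ∃! b, b ∈ s ∧ c ∣ r - b) :
    s.PairwiseDisjoint fun b => (a * b + ·) '' Set.range (a * c * ·) := by
  intro b hb b' hb' hne
  simp only [Function.onFun, add_left_image_range_mul_left]
  refine (Set.disjoint_image_iff ha).2 (Set.disjoint_left.2 fun r hr hr' => hne ?_)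
  exact (hs r).unique ⟨hb, hr⟩ ⟨hb', hr'⟩

end Transversal

theorem stmt3_general {R 𝕜 : Type*} [Ring R] [DecidableEq R] [RCLike 𝕜]
    (U S : R → (ℓ²(R, 𝕜) →L[𝕜] ℓ²(R, 𝕜)))
    (hU : ∀ b r : R, U b (lp.single 2 r 1) = lp.single 2 (b + r) 1)
    (hS : ∀ a : R, IsLeftRegular a → ∀ r : R, S a (lp.single 2 r 1) = lp.single 2 (a * r) 1)
    {a c : R} (ha : IsLeftRegular a) (hc : IsLeftRegular c)
    (𝓡 : Finset R) (h𝓡 : ∀ r : R, ∃! b, b ∈ 𝓡 ∧ c ∣ (r - b)) :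
    (S a).comp (ContinuousLinearMap.adjoint (S a)) =
      ∑ b ∈ 𝓡, (U (a * b)).comp
        (((S (a * c)).comp (ContinuousLinearMap.adjoint (S (a * c)))).comp (U (-(a * b)))) := by
  have range_proj {d : R} (hd : IsLeftRegular d) :
      IsCoordProj ((S d).comp (ContinuousLinearMap.adjoint (S d))) (Set.range (d * ·)) :=
    isCoordProj_comp_adjoint hd (hS d hd)
  have conj_proj (b : R) :
      IsCoordProj ((U (a * b)).comp (((S (a * c)).comp
        (ContinuousLinearMap.adjoint (S (a * c)))).comp (U (-(a * b)))))
        ((a * b + ·) '' Set.range (a * c * ·)) :=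
    (range_proj (ha.mul hc)).conj (Equiv.addLeft (a * b)) (hU (a * b)) (hU (-(a * b)))
  have sum_proj := IsCoordProj.sum (fun b _ => conj_proj b)
    (pairwiseDisjoint_add_left_image_range_mul_left ha h𝓡)
  have partition : ⋃ b ∈ 𝓡, (a * b + ·) '' Set.range (a * c * ·) = Set.range (a * ·) :=
    biUnion_add_left_image_range_mul_left a fun r => (h𝓡 r).exists
  exact (range_proj ha).unique (partition ▸ sum_proj)

/-- Let `a, c ∈ R \ {0}` and let `𝓡 ⊆ R` be a transversal for `R/cR` (a finite set
containing exactly one representative of each coset of the ideal `cR`).  Then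
`e_a = Σ_{b ∈ 𝓡} U^{ab} e_{ac} U^{-ab}` as operators on `ℓ²(R)`, where `e_a = S_a S_a*`.
Here `U` and `S` are the families of bounded operators on `ℓ²(R)` determined on the
canonical orthonormal basis by `U^b ε_r = ε_{b+r}` and `S_a ε_r = ε_{ar}`. -/
theorem stmt3 (K : Type*) [Field K] [NumberField K]
    (U S : 𝓞 K → (lp (fun _ : 𝓞 K => ℂ) 2 →L[ℂ] lp (fun _ : 𝓞 K => ℂ) 2))
    (hU : ∀ b r : 𝓞 K, U b (lp.single 2 r (1 : ℂ)) = lp.single 2 (b + r) (1 : ℂ))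
    (hS : ∀ a : 𝓞 K, a ≠ 0 → ∀ r : 𝓞 K,
      S a (lp.single 2 r (1 : ℂ)) = lp.single 2 (a * r) (1 : ℂ))
    (a c : 𝓞 K) (ha : a ≠ 0) (hc : c ≠ 0)
    (𝓡 : Finset (𝓞 K)) (h𝓡 : ∀ r : 𝓞 K, ∃! b, b ∈ 𝓡 ∧ c ∣ (r - b)) :
    (S a).comp (ContinuousLinearMap.adjoint (S a)) =
      ∑ b ∈ 𝓡, (U (a * b)).comp
        (((S (a * c)).comp (ContinuousLinearMap.adjoint (S (a * c)))).comp (U (-(a * b)))) :=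
  stmt3_general U S hU (fun d hd => hS d hd.ne_zero) (IsRegular.of_ne_zero ha).left
    (IsRegular.of_ne_zero hc).left 𝓡 h𝓡
end

section
/- Let c ∈ R \ {0}, let η ∈ R be a unit, and let b, d, d' ∈ R. Then the operator S_c* U^{-d} U^b S_η U^{d'} S_c on ℓ²(R) equals 0 if −d + b + η d' ∉ cR, and equals U^{(−d + b + η d')/c} S_η if −d + b + η d' ∈ cR (where (−d + b + η d')/c denotes the unique element r ∈ R with cr = −d + b + η d'). -/
open NumberField
open scoped Classical

/-!
The operator `B = U^{-d} U^b S_η U^{d'} S_c` maps `ε_s` to `ε_{g(s)}`, where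
`g(s) = (-d + b + ηd') + c(ηs)`. The `(i, j)` matrix coefficient of `S_c* B` is therefore `1` if
`c i = g(j)` and `0` otherwise. Since `c` divides `g(j)` if and only if it divides
`-d + b + ηd'`, either all coefficients vanish or `g(j) = c(r + ηj)` for every `j`, with
`c r = -d + b + ηd'`; in the latter case `c` can be cancelled.
-/

theorem lp_continuousLinearMap_ext_single_one {𝕜 ι F : Type*} [NormedRing 𝕜] [DecidableEq ι]
    [AddCommMonoid F] [Module 𝕜 F] [TopologicalSpace F] [T2Space F] {p : ENNReal} [Fact (1 ≤ p)]
    (hp : p ≠ ⊤) {A B : lp (fun _ : ι => 𝕜) p →L[𝕜] F}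
    (h : ∀ i, A (lp.single p i 1) = B (lp.single p i 1)) : A = B :=
  lp.ext_continuousLinearMap hp fun i => ContinuousLinearMap.ext_ring (h i)

section BasisMaps

open scoped lp InnerProduct

variable {𝕜 ι κ τ : Type*} [RCLike 𝕜] [DecidableEq ι] [DecidableEq κ] [DecidableEq τ]

/-- The bounded operator `A` implements the map of index sets `f` if `A ε_i = ε_{f i}` for all
`i`. Only the action on the canonical basis is recorded; it determines `A`. -/
def Implements (A : ℓ²(ι, 𝕜) →L[𝕜] ℓ²(κ, 𝕜)) (f : ι → κ) : Prop :=
  ∀ i, A (lp.single 2 i 1) = lp.single 2 (f i) 1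

namespace Implements

theorem comp {B : ℓ²(κ, 𝕜) →L[𝕜] ℓ²(τ, 𝕜)} {A : ℓ²(ι, 𝕜) →L[𝕜] ℓ²(κ, 𝕜)} {g : κ → τ}
    {f : ι → κ} (hB : Implements B g) (hA : Implements A f) : Implements (B ∘L A) (g ∘ f) :=
  fun i => (congrArg B (hA i)).trans (hB (f i))

variable {A : ℓ²(ι, 𝕜) →L[𝕜] ℓ²(κ, 𝕜)} {B : ℓ²(τ, 𝕜) →L[𝕜] ℓ²(κ, 𝕜)} {f : ι → κ} {g : τ → κ}

theorem adjoint_comp_single_apply (hA : Implements A f) (hB : Implements B g) (j : τ) (i : ι) :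
    (A† ∘L B) (lp.single 2 j 1) i = if f i = g j then 1 else 0 := by
  have h := A.adjoint_inner_right (lp.single 2 i 1) (B (lp.single 2 j 1))
  rw [hA i, hB j, lp.inner_single_left, lp.inner_single_left] at h
  simpa [hB j, Pi.single_apply] using h

theorem adjoint_comp_eq_zero (hA : Implements A f) (hB : Implements B g)
    (hfg : ∀ i j, f i ≠ g j) : A† ∘L B = 0 := by
  refine lp_continuousLinearMap_ext_single_one ENNReal.ofNat_ne_top fun j =>
    lp.ext (funext fun i => ?_)
  rw [hA.adjoint_comp_single_apply hB, if_neg (hfg i j)]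
  rfl

theorem adjoint_comp_eq {C : ℓ²(τ, 𝕜) →L[𝕜] ℓ²(ι, 𝕜)} {h : τ → ι} (hA : Implements A f)
    (hf : f.Injective) (hB : Implements B (f ∘ h)) (hC : Implements C h) : A† ∘L B = C := by
  refine lp_continuousLinearMap_ext_single_one ENNReal.ofNat_ne_top fun j =>
    lp.ext (funext fun i => ?_)
  rw [hA.adjoint_comp_single_apply hB, hC j, lp.single_apply, Pi.single_apply]
  simp only [Function.comp_apply, hf.eq_iff]

end Implements

end BasisMaps

theorem stmt4_general {𝕜 R : Type*} [RCLike 𝕜] [CommRing R] [DecidableEq R]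
    (U S : R → (lp (fun _ : R => 𝕜) 2 →L[𝕜] lp (fun _ : R => 𝕜) 2))
    (hU : ∀ b r : R, U b (lp.single 2 r (1 : 𝕜)) = lp.single 2 (b + r) (1 : 𝕜))
    (hS : ∀ a ∈ nonZeroDivisors R, ∀ r : R,
      S a (lp.single 2 r (1 : 𝕜)) = lp.single 2 (a * r) (1 : 𝕜))
    (c : R) (hc : c ∈ nonZeroDivisors R) (η : R) (hη : η ∈ nonZeroDivisors R) (b d d' : R) :
    (¬ c ∣ (-d + b + η * d') →
      (ContinuousLinearMap.adjoint (S c)).comp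
        ((U (-d)).comp ((U b).comp ((S η).comp ((U d').comp (S c))))) = 0) ∧
    (∀ r : R, c * r = -d + b + η * d' →
      (ContinuousLinearMap.adjoint (S c)).comp
        ((U (-d)).comp ((U b).comp ((S η).comp ((U d').comp (S c))))) =
      (U r).comp (S η)) := by
  have hU' (b : R) : Implements (U b) (b + ·) := hU b
  have hSc : Implements (S c) (c * ·) := hS c hc
  have hSη : Implements (S η) (η * ·) := hS η hη
  have hword : Implements ((U (-d)).comp ((U b).comp ((S η).comp ((U d').comp (S c)))))
      fun s => (-d + b + η * d') + c * (η * s) := by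
    convert (hU' (-d)).comp ((hU' b).comp (hSη.comp ((hU' d').comp hSc))) using 1
    funext s
    simp only [Function.comp_apply]
    ring
  constructor
  · exact fun hndvd => hSc.adjoint_comp_eq_zero hword fun i j hij =>
      hndvd ⟨i - η * j, by linear_combination -hij⟩
  · intro r hr
    have hfactor : (fun s => (-d + b + η * d') + c * (η * s)) = (c * ·) ∘ (r + ·) ∘ (η * ·) := by
      funext s
      simp only [Function.comp_apply, ← hr, mul_add]
    exact hSc.adjoint_comp_eq (fun _ _ => (mul_cancel_left_mem_nonZeroDivisors hc).1)
      (hfactor ▸ hword) ((hU' r).comp hSη)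

/-- Let `c ∈ R \ {0}`, let `η ∈ R` be a unit, and let `b, d, d' ∈ R`.  Then the operator
`S_c* U^{-d} U^b S_η U^{d'} S_c` on `ℓ²(R)` equals `0` if `−d + b + ηd' ∉ cR`, and equals
`U^{(−d + b + ηd')/c} S_η` if `−d + b + ηd' = cr ∈ cR`.  Here `U` and `S` are the families
of bounded operators on `ℓ²(R)` determined on the canonical orthonormal basis by
`U^b ε_r = ε_{b+r}` and `S_a ε_r = ε_{ar}`, and `S_c*` is the adjoint of `S_c`. -/
theorem stmt4 (K : Type*) [Field K] [NumberField K]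
    (U S : 𝓞 K → (lp (fun _ : 𝓞 K => ℂ) 2 →L[ℂ] lp (fun _ : 𝓞 K => ℂ) 2))
    (hU : ∀ b r : 𝓞 K, U b (lp.single 2 r (1 : ℂ)) = lp.single 2 (b + r) (1 : ℂ))
    (hS : ∀ a : 𝓞 K, a ≠ 0 → ∀ r : 𝓞 K,
      S a (lp.single 2 r (1 : ℂ)) = lp.single 2 (a * r) (1 : ℂ))
    (c : 𝓞 K) (hc : c ≠ 0) (η : 𝓞 K) (hη : IsUnit η) (b d d' : 𝓞 K) :
    (¬ c ∣ (-d + b + η * d') →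
      (ContinuousLinearMap.adjoint (S c)).comp
        ((U (-d)).comp ((U b).comp ((S η).comp ((U d').comp (S c))))) = 0) ∧
    (∀ r : 𝓞 K, c * r = -d + b + η * d' →
      (ContinuousLinearMap.adjoint (S c)).comp
        ((U (-d)).comp ((U b).comp ((S η).comp ((U d').comp (S c))))) =
      (U r).comp (S η)) :=
  stmt4_general U S hU (fun a ha => hS a (nonZeroDivisors.ne_zero ha)) c
    (mem_nonZeroDivisors_of_ne_zero hc) η hη.mem_nonZeroDivisors b d d'
end

section
/- For every x ∈ R and every η ∈ μ, the cyclic subgroups ⟨(x, η)⟩ and ⟨(0, η)⟩ of the semidirect product R ⋊ μ are conjugate in R ⋊ μ if and only if x ∈ (1 − η)R. -/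
open NumberField

/-- The multiplicative action of the roots of unity `μ` (the torsion subgroup of `(𝓞 K)ˣ`)
on the additive group of the ring of integers, as a homomorphism into the automorphisms of
`Multiplicative (𝓞 K)`; this is the datum needed to form the semidirect product `R ⋊ μ`. -/
noncomputable def muAction (K : Type*) [Field K] [NumberField K] :
    Units.torsion K →* MulAut (Multiplicative (𝓞 K)) where
  toFun η := AddEquiv.toMultiplicative ((DistribMulAction.toAddAut (𝓞 K)ˣ (𝓞 K)) η)
  map_one' := by ext x; simp [AddEquiv.toMultiplicative]
  map_mul' a b := by ext x; simp [AddEquiv.toMultiplicative, mul_smul]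

/-! In `N ⋊[φ] G`, a conjugate of `(1, k)` by `g` whose `G`-component is `h` has `N`-component
`g.left / φ h g.left`, whatever `k` is. If the cyclic subgroups generated by `(n, h)` and `(1, h)`
are conjugate, then `(n, h)` is conjugate to some power `(1, h ^ i)`, and the formula gives `n`
independently of `i`. -/

section SemidirectProduct

variable {N G : Type*} [Group N] [Group G] {φ : G →* MulAut N}

open SemidirectProduct

theorem conj_inr_right (g : N ⋊[φ] G) (k : G) :
    (MulAut.conj g (inr k)).right = g.right * k * g.right⁻¹ := by
  simp only [MulAut.conj_apply, mul_right, inv_right, right_inr]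

theorem conj_inr_left (g : N ⋊[φ] G) (k : G) :
    (MulAut.conj g (inr k)).left = g.left / φ (MulAut.conj g (inr k)).right g.left := by
  simp only [MulAut.conj_apply, mul_left, mul_right, inv_left, inv_right, left_inr, right_inr,
    map_one, mul_one, map_mul, map_inv, MulAut.mul_apply, div_eq_mul_inv]

theorem conj_inl_inr (m : N) (h : G) :
    MulAut.conj (inl m) (inr h) = (⟨m / φ h m, h⟩ : N ⋊[φ] G) := by
  have right_eq : (MulAut.conj (inl m : N ⋊[φ] G) (inr h)).right = h := by
    simp only [conj_inr_right, right_inl, one_mul, inv_one, mul_one]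
  ext
  · rw [conj_inr_left, right_eq, left_inl]
  · exact right_eq

theorem stmt7_general (n : N) (h : G) :
    (∃ g : N ⋊[φ] G, Subgroup.zpowers (⟨n, h⟩ : N ⋊[φ] G) =
        Subgroup.map (MulAut.conj g).toMonoidHom (Subgroup.zpowers (inr h))) ↔
      ∃ m : N, n = m / φ h m := by
  constructor
  · rintro ⟨g, hg⟩
    have mem_conj : (⟨n, h⟩ : N ⋊[φ] G) ∈
        Subgroup.map (MulAut.conj g).toMonoidHom (Subgroup.zpowers (inr h)) :=
      hg ▸ Subgroup.mem_zpowers _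
    obtain ⟨_, ⟨i, rfl⟩, conj_eq⟩ := mem_conj
    have conj_inr_eq : MulAut.conj g (inr (h ^ i)) = ⟨n, h⟩ := by
      rw [map_zpow inr]
      exact conj_eq
    exact ⟨g.left, by simpa only [conj_inr_eq] using conj_inr_left g (h ^ i)⟩
  · rintro ⟨m, rfl⟩
    refine ⟨inl m, ?_⟩
    rw [MonoidHom.map_zpowers, MulEquiv.toMonoidHom_eq_coe, MonoidHom.coe_coe, conj_inl_inr]

end SemidirectProduct

theorem muAction_ofAdd {K : Type*} [Field K] [NumberField K] (η : Units.torsion K) (r : 𝓞 K) :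
    muAction K η (Multiplicative.ofAdd r) =
      Multiplicative.ofAdd (((η : (𝓞 K)ˣ) : 𝓞 K) * r) :=
  rfl

theorem ofAdd_div_muAction_ofAdd {K : Type*} [Field K] [NumberField K] (η : Units.torsion K)
    (r : 𝓞 K) :
    Multiplicative.ofAdd r / muAction K η (Multiplicative.ofAdd r) =
      Multiplicative.ofAdd ((1 - ((η : (𝓞 K)ˣ) : 𝓞 K)) * r) := by
  rw [muAction_ofAdd, ← ofAdd_sub, sub_mul, one_mul]

/-- For `x ∈ R` and `η ∈ μ`, the cyclic subgroups `⟨(x, η)⟩` and `⟨(0, η)⟩` of `R ⋊ μ` are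
conjugate in `R ⋊ μ` if and only if `x ∈ (1 − η)R`. -/
theorem stmt7 (K : Type*) [Field K] [NumberField K]
    (x : 𝓞 K) (η : Units.torsion K) :
    (∃ g : Multiplicative (𝓞 K) ⋊[muAction K] Units.torsion K,
      Subgroup.zpowers (⟨Multiplicative.ofAdd x, η⟩ :
          Multiplicative (𝓞 K) ⋊[muAction K] Units.torsion K) =
        Subgroup.map (MulAut.conj g).toMonoidHom
          (Subgroup.zpowers (⟨Multiplicative.ofAdd (0 : 𝓞 K), η⟩ :
            Multiplicative (𝓞 K) ⋊[muAction K] Units.torsion K))) ↔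
      ∃ r : 𝓞 K, x = (1 - ((η : (𝓞 K)ˣ) : 𝓞 K)) * r := by
  refine (stmt7_general _ _).trans (Multiplicative.ofAdd.surjective.exists.trans ?_)
  simp only [ofAdd_div_muAction_ofAdd, EmbeddingLike.apply_eq_iff_eq]
end

section
/- Let i, j be positive integers with ζ^i ≠ 1 and ζ^{ij} ≠ 1, let c ∈ R be divisible by ∏_{t ∣ m, 1 ≤ t < m} (1 − ζ^t) in R, and let b, d ∈ R. If (Σ_{k=0}^{j−1} ζ^{ik})·b − (1 − ζ^{ij})·d ∈ cR, then b ∈ (1 − ζ^i)R. -/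
open NumberField

/-
Since `ζ ^ m = 1`, the element `1 - ζ ^ (i * j)` divides the factor of the product indexed by
`t = gcd (i * j, m)`: modulo `1 - ζ ^ (i * j)`, both `ζ ^ (i * j)` and `ζ ^ m` equal `1`, hence so
does `ζ ^ t`. It therefore divides `c`, and so also `(∑ k < j, ζ ^ (i * k)) * b`. Factoring
`1 - ζ ^ (i * j) = (∑ k < j, ζ ^ (i * k)) * (1 - ζ ^ i)` and cancelling the nonzero sum gives the
claim.
-/

theorem dvd_one_sub_pow_gcd_iff {R : Type*} [CommRing R] {a x : R} {m n : ℕ} :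
    a ∣ 1 - x ^ m.gcd n ↔ a ∣ 1 - x ^ m ∧ a ∣ 1 - x ^ n := by
  have dvd_iff (k : ℕ) : a ∣ 1 - x ^ k ↔ Ideal.Quotient.mk (Ideal.span {a}) x ^ k = 1 := by
    rw [← Ideal.mem_span_singleton, ← Ideal.Quotient.mk_eq_mk_iff_sub_mem, map_one, map_pow,
      eq_comm]
  simp only [dvd_iff, pow_gcd_eq_one]

theorem one_sub_pow_dvd_prod_properDivisors {R : Type*} [CommRing R] {x : R} {m n : ℕ}
    (hm : m ≠ 0) (hxm : x ^ m = 1) (hxn : x ^ n ≠ 1) :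
    1 - x ^ n ∣ ∏ t ∈ m.properDivisors, (1 - x ^ t) := by
  have not_dvd : ¬ m ∣ n := by
    rintro ⟨k, rfl⟩
    exact hxn (by rw [pow_mul, hxm, one_pow])
  have gcd_ne : n.gcd m ≠ m := fun h => not_dvd (Nat.gcd_eq_right_iff_dvd.1 h)
  have gcd_mem : n.gcd m ∈ m.properDivisors :=
    Nat.mem_properDivisors.2
      ⟨n.gcd_dvd_right m, (Nat.gcd_le_right n hm.pos).lt_of_ne gcd_ne⟩
  calc 1 - x ^ n ∣ 1 - x ^ n.gcd m := dvd_one_sub_pow_gcd_iff.2 ⟨dvd_rfl, by simp [hxm]⟩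
    _ ∣ ∏ t ∈ m.properDivisors, (1 - x ^ t) := Finset.dvd_prod_of_mem (fun t => 1 - x ^ t) gcd_mem

theorem one_sub_pow_dvd_geom_sum_mul_iff {R : Type*} [CommRing R] [NoZeroDivisors R] {x b : R}
    {n : ℕ} (hx : x ^ n ≠ 1) :
    1 - x ^ n ∣ (∑ k ∈ Finset.range n, x ^ k) * b ↔ 1 - x ∣ b := by
  have factor : (∑ k ∈ Finset.range n, x ^ k) * (1 - x) = 1 - x ^ n := geom_sum_mul_neg x n
  have sum_ne_zero : ∑ k ∈ Finset.range n, x ^ k ≠ 0 :=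
    left_ne_zero_of_mul (factor ▸ sub_ne_zero.2 hx.symm)
  rw [← factor, mul_dvd_mul_iff_left sum_ne_zero]

theorem stmt9_general {R : Type*} [CommRing R] [NoZeroDivisors R] {m : ℕ} (hm : m ≠ 0) {ζ : R}
    (hζ : ζ ^ m = 1) {i j : ℕ} (hζij : ζ ^ (i * j) ≠ 1) {b c d : R}
    (hc : (∏ t ∈ m.properDivisors, (1 - ζ ^ t)) ∣ c)
    (h : c ∣ (∑ k ∈ Finset.range j, ζ ^ (i * k)) * b - (1 - ζ ^ (i * j)) * d) :
    1 - ζ ^ i ∣ b := by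
  have dvd_c : 1 - ζ ^ (i * j) ∣ c := (one_sub_pow_dvd_prod_properDivisors hm hζ hζij).trans hc
  have dvd_sum_mul : 1 - ζ ^ (i * j) ∣ (∑ k ∈ Finset.range j, ζ ^ (i * k)) * b :=
    (dvd_sub_left (dvd_mul_right _ d)).1 (dvd_c.trans h)
  simp only [pow_mul] at hζij dvd_sum_mul
  exact (one_sub_pow_dvd_geom_sum_mul_iff hζij).1 dvd_sum_mul

/-- Let `K` be a number field, `m` the number of roots of unity in `K`, and `ζ ∈ R` a
generator of the group of roots of unity (a primitive `m`-th root of unity in the ring of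
integers `R`).  Let `i, j` be positive integers with `ζ^i ≠ 1` and `ζ^{ij} ≠ 1`, let
`c ∈ R` be divisible by `∏_{t ∣ m, 1 ≤ t < m} (1 − ζ^t)`, and let `b, d ∈ R`.  If
`(Σ_{k=0}^{j−1} ζ^{ik})·b − (1 − ζ^{ij})·d ∈ cR`, then `b ∈ (1 − ζ^i)R`. -/
theorem stmt9 (K : Type*) [Field K] [NumberField K]
    (m : ℕ) (hm : m = Nat.card (Units.torsion K))
    (ζ : 𝓞 K) (hζ : IsPrimitiveRoot ζ m)
    (i j : ℕ) (hi : 0 < i) (hj : 0 < j) (hζi : ζ ^ i ≠ 1) (hζij : ζ ^ (i * j) ≠ 1)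
    (c : 𝓞 K) (hc : (∏ t ∈ Nat.properDivisors m, (1 - ζ ^ t)) ∣ c)
    (b d : 𝓞 K)
    (h : c ∣ ((∑ k ∈ Finset.range j, ζ ^ (i * k)) * b - (1 - ζ ^ (i * j)) * d)) :
    (1 - ζ ^ i) ∣ b := by
  have hm₀ : m ≠ 0 := hm ▸ Units.torsionOrder_ne_zero K
  exact stmt9_general hm₀ hζ.pow_eq_one hζij hc h
end

section
/- Let G be a finitely generated free abelian group, A a saturated subgroup of G (i.e., for all x ∈ G and all integers N > 0, Nx ∈ A implies x ∈ A), and y_1, …, y_r elements of G. Then there exist elements ȳ_1, …, ȳ_r ∈ G such that for every 1 ≤ j ≤ r, A + ⟨ȳ_1, …, ȳ_j⟩ = {x ∈ G : there exists an integer N > 0 with Nx ∈ A + ⟨y_1, …, y_j⟩}. -/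
/-!
Saturation preserves rank, so in a finitely generated torsion-free module over a principal ideal
domain the saturation of a cyclic submodule is free of rank at most one, hence cyclic. Applied in
`M ⧸ B` with `B` saturated, this gives `z` such that `B + ⟨z⟩` is the saturation of `B + ⟨y⟩`.
Taking for `B` the saturation of `A + ⟨y₁, …, yⱼ⟩` and for `y` the next element `yⱼ₊₁` produces
`ȳⱼ₊₁`, because saturating `A + ⟨y₁, …, yⱼ⟩` before adding `yⱼ₊₁` does not change the saturation
of the sum.
-/

open Submodule nonZeroDivisors

theorem span_image_lt_succ {R M : Type*} [Semiring R] [AddCommMonoid M] [Module R M]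
    {r j : ℕ} (hj : j < r) (v : Fin r → M) :
    span R (v '' {i | (i : ℕ) < j + 1}) = span R (v '' {i | (i : ℕ) < j}) ⊔ span R {v ⟨j, hj⟩} := by
  have initial_succ : {i : Fin r | (i : ℕ) < j + 1} = insert ⟨j, hj⟩ {i : Fin r | (i : ℕ) < j} := by
    ext i
    simp only [Set.mem_ofPred_eq, Set.mem_insert_iff, Fin.ext_iff]
    omega
  rw [initial_succ, Set.image_insert_eq, span_insert, sup_comm]

section Saturation

variable {R M M' : Type*} [CommRing R] [AddCommGroup M] [Module R M] [AddCommGroup M'] [Module R M']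

theorem mem_comap_mkQ_torsion {N : Submodule R M} {x : M} :
    x ∈ (torsion R (M ⧸ N)).comap N.mkQ ↔ ∃ a ∈ R⁰, a • x ∈ N := by
  simp [Submonoid.smul_def, ← Quotient.mk_smul]

variable (R M) in
/-- The saturation of a submodule `N`: the preimage in `M` of the torsion of `M ⧸ N`. As a closure
operator, its closed elements are the saturated submodules. -/
def saturation : ClosureOperator (Submodule R M) :=
  .mk₂ (fun N ↦ (torsion R (M ⧸ N)).comap N.mkQ)
    (fun _ x hx ↦ mem_comap_mkQ_torsion.2 ⟨1, one_mem _, by rwa [one_smul]⟩)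
    (fun _ _ h x hx ↦ by
      obtain ⟨a, ha, hax⟩ := mem_comap_mkQ_torsion.1 hx
      obtain ⟨b, hb, hbax⟩ := mem_comap_mkQ_torsion.1 (h hax)
      exact mem_comap_mkQ_torsion.2 ⟨b * a, mul_mem hb ha, by rwa [mul_smul]⟩)

theorem mem_saturation {N : Submodule R M} {x : M} :
    x ∈ saturation R M N ↔ ∃ a ∈ R⁰, a • x ∈ N :=
  mem_comap_mkQ_torsion

theorem saturation_comap (f : M →ₗ[R] M') (N : Submodule R M') :
    saturation R M (N.comap f) = (saturation R M' N).comap f := by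
  ext x
  simp only [mem_comap, mem_saturation, map_smul]

theorem isClosed_saturation_iff_isTorsionFree [IsDomain R] {N : Submodule R M} :
    (saturation R M).IsClosed N ↔ Module.IsTorsionFree R (M ⧸ N) := by
  rw [isTorsionFree_iff_torsion_eq_bot, (saturation R M).isClosed_iff,
    ← (comap_injective_of_surjective N.mkQ_surjective).eq_iff, comap_bot, ker_mkQ]
  rfl

theorem rank_saturation [IsDomain R] (N : Submodule R M) :
    Module.rank R (saturation R M N) = Module.rank R N := by
  set S := saturation R M N
  have hNS : N ≤ S := (saturation R M).le_closure N
  have torsion_quotient : Module.IsTorsion R (S ⧸ N.submoduleOf S) := by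
    intro q
    obtain ⟨⟨x, hx⟩, rfl⟩ := mkQ_surjective _ q
    obtain ⟨a, ha, hax⟩ := mem_saturation.1 hx
    exact ⟨⟨a, ha⟩, (Quotient.mk_eq_zero _).2 hax⟩
  rw [← rank_quotient_add_rank_of_isDomain (N.submoduleOf S),
    Module.rank_eq_zero_iff_isTorsion.2 torsion_quotient, zero_add,
    (submoduleOfEquivOfLe hNS).rank_eq]

end Saturation

section PrincipalIdealDomain

variable {R M : Type*} [CommRing R] [IsDomain R] [IsPrincipalIdealRing R]
  [AddCommGroup M] [Module R M] [Module.Finite R M]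

theorem isPrincipal_saturation_span_singleton [Module.IsTorsionFree R M] (y : M) :
    (saturation R M (span R {y})).IsPrincipal := by
  rw [← rank_le_one_iff_isPrincipal, rank_saturation]
  simpa only [Cardinal.mk_singleton] using rank_span_le (R := R) {y}

theorem exists_sup_span_singleton_eq_saturation {B : Submodule R M}
    (hB : (saturation R M).IsClosed B) (y : M) :
    ∃ z, B ⊔ span R {z} = saturation R M (B ⊔ span R {y}) := by
  have := isClosed_saturation_iff_isTorsionFree.1 hB
  have comap_span (x : M) : (span R {B.mkQ x}).comap B.mkQ = B ⊔ span R {x} := by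
    rw [← comap_map_mkQ, map_span, Set.image_singleton]
  obtain ⟨w, hw⟩ := isPrincipal_saturation_span_singleton (R := R) (B.mkQ y)
  obtain ⟨z, rfl⟩ := B.mkQ_surjective w
  exact ⟨z, by rw [← comap_span, ← comap_span, saturation_comap, hw]⟩

theorem stmt14_general {A : Submodule R M} (hA : (saturation R M).IsClosed A)
    (r : ℕ) (y : Fin r → M) :
    ∃ ybar : Fin r → M, ∀ j ≤ r,
      A ⊔ span R (ybar '' {i : Fin r | (i : ℕ) < j}) =
        saturation R M (A ⊔ span R (y '' {i : Fin r | (i : ℕ) < j})) := by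
  choose ybar h_ybar using fun k : Fin r ↦ exists_sup_span_singleton_eq_saturation
    ((saturation R M).isClosed_closure (A ⊔ span R (y '' {i : Fin r | (i : ℕ) < k}))) (y k)
  refine ⟨ybar, fun j hj ↦ ?_⟩
  induction j with
  | zero => simpa using hA.closure_eq.symm
  | succ j ih =>
    rw [span_image_lt_succ hj, span_image_lt_succ hj, ← sup_assoc, ← sup_assoc,
      ih (Nat.le_of_succ_le hj), h_ybar ⟨j, hj⟩, ClosureOperator.closure_sup_closure_left]

end PrincipalIdealDomain

section AddSubgroup

variable {G : Type*} [AddCommGroup G]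

theorem coe_saturation_toIntSubmodule (B : AddSubgroup G) :
    (saturation ℤ G B.toIntSubmodule : Set G) = {x | ∃ n : ℤ, 0 < n ∧ n • x ∈ B} := by
  ext x
  rw [SetLike.mem_coe, mem_saturation, Set.mem_ofPred_eq]
  constructor
  · rintro ⟨n, hn, hnx⟩
    refine ⟨|n|, abs_pos.2 (nonZeroDivisors.ne_zero hn), ?_⟩
    obtain h | h := abs_choice n <;> rw [h]
    exacts [hnx, neg_smul n x ▸ neg_mem hnx]
  · rintro ⟨n, hn, hnx⟩
    exact ⟨n, mem_nonZeroDivisors_of_ne_zero hn.ne', hnx⟩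

theorem isClosed_saturation_toIntSubmodule {A : AddSubgroup G}
    (hA : ∀ (x : G) (n : ℤ), 0 < n → n • x ∈ A → x ∈ A) :
    (saturation ℤ G).IsClosed A.toIntSubmodule := by
  rw [ClosureOperator.isClosed_iff_closure_le, ← SetLike.coe_subset_coe,
    coe_saturation_toIntSubmodule]
  rintro x ⟨n, hn, hnx⟩
  exact hA x n hn hnx

theorem toIntSubmodule_sup_closure (A : AddSubgroup G) (s : Set G) :
    (A ⊔ AddSubgroup.closure s).toIntSubmodule = A.toIntSubmodule ⊔ span ℤ s := by
  rw [SupHomClass.map_sup, AddSubgroup.toIntSubmodule_closure]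

end AddSubgroup

/-- Let `G` be a finitely generated free abelian group, `A` a saturated subgroup
(`N•x ∈ A` for some `N > 0` implies `x ∈ A`), and `y 0, …, y (r-1)` elements of `G`.
Then there exist `ȳ 0, …, ȳ (r-1)` such that for every `1 ≤ j ≤ r`, the subgroup
`A + ⟨ȳ 0, …, ȳ (j-1)⟩` equals `{x ∈ G : N•x ∈ A + ⟨y 0, …, y (j-1)⟩ for some integer N > 0}`. -/
theorem stmt14 {G : Type*} [AddCommGroup G] [Module.Free ℤ G] [Module.Finite ℤ G]
    (A : AddSubgroup G)
    (hA : ∀ (x : G) (n : ℤ), 0 < n → n • x ∈ A → x ∈ A)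
    (r : ℕ) (y : Fin r → G) :
    ∃ ybar : Fin r → G, ∀ j : ℕ, 1 ≤ j → j ≤ r →
      ((A ⊔ AddSubgroup.closure (ybar '' {i : Fin r | (i : ℕ) < j}) : AddSubgroup G) : Set G) =
        {x : G | ∃ n : ℤ, 0 < n ∧
          n • x ∈ A ⊔ AddSubgroup.closure (y '' {i : Fin r | (i : ℕ) < j})} := by
  obtain ⟨ybar, h⟩ := stmt14_general (isClosed_saturation_toIntSubmodule hA) r y
  exact ⟨ybar, fun j _ hj ↦ by
    rw [← coe_saturation_toIntSubmodule, toIntSubmodule_sup_closure, ← h j hj,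
      ← toIntSubmodule_sup_closure, AddSubgroup.coe_toIntSubmodule]⟩
end

section
/- Let K be a number field and μ the group of roots of unity in K, i.e., the torsion subgroup of the multiplicative group K^×. Then there exists a subgroup Γ of K^× which is free abelian (Γ, written additively, is a free ℤ-module) such that μ ∩ Γ = {1} and every element of K^× can be written as a product of an element of μ and an element of Γ; equivalently, the multiplication map μ × Γ → K^×, (ω, γ) ↦ ωγ, is a group isomorphism. -/
/-!
The divisor map `Kˣ → ⨁ᵥ ℤ` has kernel `(𝓞 K)ˣ` and its image is free, as a subgroup of a free
abelian group. Hence the divisor map splits, and `Kˣ` retracts onto `(𝓞 K)ˣ`. Composing this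
retraction with `(𝓞 K)ˣ → (𝓞 K)ˣ ⧸ μ`, whose target is free by Dirichlet's unit theorem, and pairing
the result with the divisor map gives a homomorphism from `Kˣ` to a free abelian group with kernel
exactly `μ`. Its image is again free, so it splits as well, and the image of a section is `Γ`.
-/

section FreeSubmodule

variable {R ι κ M : Type*} [CommRing R] [AddCommGroup M] [Module R M]

theorem linearIndependent_of_triangular [IsDomain R] [LinearOrder κ] {v : κ → M}
    (φ : κ → M →ₗ[R] R) (hdiag : ∀ i, φ i (v i) ≠ 0) (hlt : ∀ i j, i < j → φ j (v i) = 0) :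
    LinearIndependent R v := by
  rw [linearIndependent_iff]
  intro l hl
  by_contra hne
  obtain ⟨m, hm⟩ := Finset.max_of_nonempty (Finsupp.support_nonempty_iff.2 hne)
  have hml : m ∈ l.support := Finset.mem_of_max hm
  have hsum : φ m (Finsupp.linearCombination R v l) = l m * φ m (v m) := by
    rw [Finsupp.linearCombination_apply, map_finsuppSum, Finsupp.sum,
      Finset.sum_eq_single_of_mem m hml]
    · rw [map_smul, smul_eq_mul]
    · intro i hi him
      rw [map_smul, hlt i m ((Finset.le_max_of_eq hi hm).lt_of_ne him), smul_zero]
  rw [hl, map_zero] at hsum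
  exact mul_ne_zero (Finsupp.mem_support_iff.1 hml) (hdiag m) hsum.symm

variable [LinearOrder ι]

/-- The ideal of `i`-th coefficients of those elements of `N` all of whose later coefficients
vanish: the leading coefficients, together with `0`, of the elements of `N` of degree at most `i`.
A generator for each `i` is what a basis of `N` is built from. -/
noncomputable def leadingCoeffIdeal (N : Submodule R (ι →₀ R)) (i : ι) : Ideal R :=
  (N ⊓ Finsupp.supported R R (Set.Iic i)).map (Finsupp.lapply i)

theorem exists_leadingCoeffIdeal_eq_span [IsPrincipalIdealRing R] (N : Submodule R (ι →₀ R))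
    (i : ι) : ∃ b ∈ N ⊓ Finsupp.supported R R (Set.Iic i), leadingCoeffIdeal N i = R ∙ b i := by
  obtain ⟨a, ha⟩ := (IsPrincipalIdealRing.principal (leadingCoeffIdeal N i)).principal
  obtain ⟨b, hb, rfl⟩ : a ∈ leadingCoeffIdeal N i := ha ▸ Submodule.mem_span_singleton_self a
  exact ⟨b, hb, ha⟩

theorem le_span_of_leadingCoeffIdeal_eq_span [WellFoundedLT ι] {N : Submodule R (ι →₀ R)}
    {b : ι → ι →₀ R} (hb : ∀ i, b i ∈ N ⊓ Finsupp.supported R R (Set.Iic i))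
    (hspan : ∀ i, leadingCoeffIdeal N i = R ∙ b i i) :
    N ≤ Submodule.span R (Set.range fun i : {i // b i i ≠ 0} ↦ b i) := by
  intro x hx
  induction hd : x.support.max using WellFoundedLT.induction generalizing x with
  | ind d ih =>
  obtain rfl | hx0 := eq_or_ne x 0
  · exact zero_mem _
  obtain ⟨m, hm⟩ := Finset.max_of_nonempty (Finsupp.support_nonempty_iff.2 hx0)
  have hx_supp : x ∈ Finsupp.supported R R (Set.Iic m) := fun j hj ↦ Finset.le_max_of_eq hj hm
  have hxm : x m ∈ R ∙ b m m := hspan m ▸ Submodule.mem_map_of_mem ⟨hx, hx_supp⟩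
  obtain ⟨c, hc⟩ := Submodule.mem_span_singleton.1 hxm
  have hbm : b m m ≠ 0 := by
    intro h
    exact Finsupp.mem_support_iff.1 (Finset.mem_of_max hm) (by rw [← hc, h, smul_zero])
  have hdeg : (x - c • b m).support.max < d := by
    rw [← hd, hm, Finset.max, Finset.sup_lt_iff (WithBot.bot_lt_coe m)]
    intro j hj
    have hjm : j ≤ m :=
      sub_mem hx_supp (Submodule.smul_mem _ c (hb m).2) hj
    refine WithBot.coe_lt_coe.2 (hjm.lt_of_ne ?_)
    rintro rfl
    exact Finsupp.mem_support_iff.1 hj (by simp [← hc])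
  have hsub := ih _ hdeg (sub_mem hx (N.smul_mem c (hb m).1)) rfl
  have hbspan := Submodule.smul_mem _ c (Submodule.subset_span (R := R)
    (Set.mem_range_self (f := fun i : {i // b i i ≠ 0} ↦ b i) ⟨m, hbm⟩))
  simpa only [sub_add_cancel] using add_mem hsub hbspan

theorem free_submodule_finsupp_of_pid [IsDomain R] [IsPrincipalIdealRing R] [WellFoundedLT ι]
    (N : Submodule R (ι →₀ R)) : Module.Free R N := by
  choose b hb hspan using exists_leadingCoeffIdeal_eq_span N
  have hli : LinearIndependent R fun i : {i // b i i ≠ 0} ↦ b i :=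
    linearIndependent_of_triangular (fun i ↦ Finsupp.lapply i.1) (fun i ↦ i.2) fun i j hij ↦
      Finsupp.notMem_support_iff.1 fun hj ↦ ((hb i).2 hj).not_gt hij
  have hN : Submodule.span R (Set.range fun i : {i // b i i ≠ 0} ↦ b i) = N :=
    le_antisymm (Submodule.span_le.2 (Set.range_subset_iff.2 fun i ↦ (hb i).1))
      (le_span_of_leadingCoeffIdeal_eq_span hb hspan)
  exact hN ▸ Module.Free.of_basis (Module.Basis.span hli)

end FreeSubmodule

section Splitting

variable {R M N F L : Type*} [CommRing R] [IsDomain R] [IsPrincipalIdealRing R]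
  [AddCommGroup M] [Module R M] [AddCommGroup N] [Module R N]
  [AddCommGroup F] [Module R F] [Module.Free R F] [AddCommGroup L] [Module R L]

theorem free_submodule_of_pid (N : Submodule R F) : Module.Free R N := by
  let b := Module.Free.chooseBasis R F
  obtain ⟨_, _⟩ := exists_wellFoundedLT (Module.Free.ChooseBasisIndex R F)
  have := free_submodule_finsupp_of_pid (N.map b.repr.toLinearMap)
  exact Module.Free.of_equiv (b.repr.submoduleMap N).symm

theorem exists_rangeRestrict_comp_eq_id (f : M →ₗ[R] F) :
    ∃ s : LinearMap.range f →ₗ[R] M, f.rangeRestrict ∘ₗ s = LinearMap.id :=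
  have := free_submodule_of_pid (LinearMap.range f)
  Module.projective_lifting_property _ _ f.surjective_rangeRestrict

theorem exists_free_isCompl_ker (f : M →ₗ[R] F) :
    ∃ Γ : Submodule R M, Module.Free R Γ ∧ IsCompl (LinearMap.ker f) Γ := by
  obtain ⟨s, hs⟩ := exists_rangeRestrict_comp_eq_id f
  have hs_left : Function.LeftInverse f.rangeRestrict s := LinearMap.congr_fun hs
  have hidem : IsIdempotentElem (s ∘ₗ f.rangeRestrict : Module.End R M) :=
    LinearMap.ext fun x ↦ congrArg s (hs_left (f.rangeRestrict x))
  have hcompl := (LinearMap.IsIdempotentElem.isCompl hidem).symm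
  rw [LinearMap.range_comp_of_range_eq_top s f.range_rangeRestrict,
    LinearMap.ker_comp_of_ker_eq_bot _ (LinearMap.ker_eq_bot.2 hs_left.injective),
    LinearMap.ker_rangeRestrict] at hcompl
  have := free_submodule_of_pid (LinearMap.range f)
  exact ⟨LinearMap.range s, .of_equiv (LinearEquiv.ofInjective s hs_left.injective), hcompl⟩

theorem exists_free_isCompl_map_ker [Module.Free R L] {i : N →ₗ[R] M} {f : M →ₗ[R] F}
    (hi : Function.Injective i) (hif : Function.Exact i f) (g : N →ₗ[R] L) :
    ∃ Γ : Submodule R M, Module.Free R Γ ∧ IsCompl ((LinearMap.ker g).map i) Γ := by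
  have hexact : Function.Exact i f.rangeRestrict := fun x ↦ by
    rw [← hif x, Subtype.ext_iff]; rfl
  obtain ⟨ρ, hρ⟩ : ∃ ρ : M →ₗ[R] N, ρ ∘ₗ i = LinearMap.id :=
    ((hexact.split_tfae hi f.surjective_rangeRestrict).out 0 1).1
      (exists_rangeRestrict_comp_eq_id f)
  have hker : LinearMap.ker ((g ∘ₗ ρ).prod f) = (LinearMap.ker g).map i := by
    have hρi (n : N) : ρ (i n) = n := LinearMap.congr_fun hρ n
    ext x
    rw [LinearMap.ker_prod, Submodule.mem_inf, LinearMap.mem_ker, LinearMap.comp_apply]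
    constructor
    · rintro ⟨hgx, hfx⟩
      obtain ⟨n, rfl⟩ := (hif x).1 hfx
      exact ⟨n, by rwa [hρi] at hgx, rfl⟩
    · rintro ⟨n, hgn, rfl⟩
      exact ⟨by rwa [hρi], hif.apply_apply_eq_zero n⟩
  exact hker ▸ exists_free_isCompl_ker ((g ∘ₗ ρ).prod f)

end Splitting

section Torsion

variable {G H F : Type*} [CommGroup G] [CommGroup H] [AddCommGroup F]

theorem map_torsion_eq_torsion [IsAddTorsionFree F] {i : H →* G} {f : Additive G →+ F}
    (hi : Function.Injective i) (hif : Function.Exact i.toAdditive f) :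
    (CommGroup.torsion H).map i = CommGroup.torsion G := by
  refine le_antisymm (Subgroup.map_le_iff_le_comap.2 fun u hu ↦ i.isOfFinOrder hu) fun x hx ↦ ?_
  have hfx : f (Additive.ofMul x) = 0 :=
    (isOfFinAddOrder_iff_eq_zero _).1 (f.isOfFinAddOrder (isOfFinAddOrder_ofMul_iff.2 hx))
  obtain ⟨u, rfl⟩ := (hif _).1 hfx
  exact ⟨u, hi.isOfFinOrder_iff.1 hx, rfl⟩

theorem exists_free_isCompl_torsion [Module.Free ℤ F]
    [Module.Free ℤ (Additive (H ⧸ CommGroup.torsion H))] {i : H →* G} {f : Additive G →+ F}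
    (hi : Function.Injective i) (hif : Function.Exact i.toAdditive f) :
    ∃ Γ : Subgroup G, Module.Free ℤ (Additive Γ) ∧ IsCompl (CommGroup.torsion G) Γ := by
  let toSubmodule : Subgroup G ≃o Submodule ℤ (Additive G) :=
    Subgroup.toAddSubgroup.trans AddSubgroup.toIntSubmodule
  let q := (QuotientGroup.mk' (CommGroup.torsion H)).toAdditive.toIntLinearMap
  have : IsAddTorsionFree F := Module.isTorsionFree_int_iff_isAddTorsionFree.1 inferInstance
  have hker : (LinearMap.ker q).map i.toAdditive.toIntLinearMap =
      toSubmodule (CommGroup.torsion G) := by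
    rw [← map_torsion_eq_torsion hi hif]
    have hq (u : H) : q (.ofMul u) = 0 ↔ u ∈ CommGroup.torsion H := QuotientGroup.eq_one_iff u
    exact Submodule.ext fun x ↦ exists_congr fun u ↦ and_congr_left' (hq u)
  obtain ⟨Γ, hfree, hcompl⟩ := exists_free_isCompl_map_ker (R := ℤ)
    (i := i.toAdditive.toIntLinearMap) (f := f.toIntLinearMap) hi hif q
  rw [hker, ← toSubmodule.apply_symm_apply Γ, ← toSubmodule.isCompl_iff] at hcompl
  exact ⟨toSubmodule.symm Γ, hfree, hcompl⟩

end Torsion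

section Divisor

open IsDedekindDomain

variable (R K : Type*) [CommRing R] [IsDedekindDomain R] [Field K] [Algebra R K]
  [IsFractionRing R K]

theorem finite_valuationOfNeZero_ne_one (x : Kˣ) :
    {v : HeightOneSpectrum R | v.valuationOfNeZero x ≠ 1}.Finite := by
  refine ((HeightOneSpectrum.Support.finite R (x : K)).union
    (HeightOneSpectrum.Support.finite R (x⁻¹ : K))).subset fun v hv ↦ ?_
  have hv' : v.valuation K (x : K) ≠ 1 := by
    rwa [← v.valuationOfNeZero_eq, ← WithZero.coe_one, Ne, WithZero.coe_inj]
  rcases hv'.lt_or_gt with h | h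
  · right
    have hpos : 0 < v.valuation K (x : K) :=
      zero_lt_iff.2 ((v.valuation K).ne_zero_iff.2 x.ne_zero)
    rwa [HeightOneSpectrum.Support, Set.mem_ofPred_eq, map_inv₀, one_lt_inv₀ hpos]
  · exact Or.inl h

/-- The principal divisor map, which detects units of `R` inside `Kˣ`. The sign is that of the
multiplicative valuations: the coefficient of `x` at `v` is `-ordᵥ x`. -/
noncomputable def divisorHom : Additive Kˣ →+ (HeightOneSpectrum R →₀ ℤ) where
  toFun x := Finsupp.ofSupportFinite (fun v ↦ (v.valuationOfNeZero x.toMul).toAdd)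
    (finite_valuationOfNeZero_ne_one R K x.toMul)
  map_zero' := Finsupp.ext fun v ↦ congrArg Multiplicative.toAdd (map_one v.valuationOfNeZero)
  map_add' x y := Finsupp.ext fun v ↦
    congrArg Multiplicative.toAdd (map_mul v.valuationOfNeZero x.toMul y.toMul)

theorem exact_unitsMap_divisorHom :
    Function.Exact (Units.map (algebraMap R K : R →* K)).toAdditive (divisorHom R K) := by
  intro x
  constructor
  · intro hx
    have hval (v : HeightOneSpectrum R) : v.valuation K (x.toMul : K) = 1 := by
      rw [← v.valuationOfNeZero_eq]
      exact congrArg _ (DFunLike.congr_fun hx v)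
    obtain ⟨a, ha⟩ :=
      HeightOneSpectrum.mem_integers_of_valuation_le_one (R := R) K (x.toMul : K) fun v ↦
        (hval v).le
    obtain ⟨b, hb⟩ :=
      HeightOneSpectrum.mem_integers_of_valuation_le_one (R := R) K (x.toMul⁻¹ : K) fun v ↦ by
        rw [map_inv₀, hval v, inv_one]
    have hab : a * b = 1 := FaithfulSMul.algebraMap_injective R K (by simp [ha, hb])
    exact ⟨.ofMul (Units.mkOfMulEqOne a b hab), Additive.toMul.injective (Units.ext ha)⟩
  · rintro ⟨u, rfl⟩
    ext v
    exact congrArg Multiplicative.toAdd (v.valuation_of_unit_eq u.toMul)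

end Divisor

theorem stmt17_general (R K : Type*) [CommRing R] [IsDedekindDomain R] [Field K] [Algebra R K]
    [IsFractionRing R K] [Module.Free ℤ (Additive (Rˣ ⧸ CommGroup.torsion Rˣ))] :
    ∃ Γ : Subgroup Kˣ, Module.Free ℤ (Additive Γ) ∧
      CommGroup.torsion Kˣ ⊓ Γ = ⊥ ∧
      ∀ x : Kˣ, ∃ ω ∈ CommGroup.torsion Kˣ, ∃ γ ∈ Γ, x = ω * γ := by
  obtain ⟨Γ, hfree, hcompl⟩ := exists_free_isCompl_torsion
    (Units.map_injective (FaithfulSMul.algebraMap_injective R K)) (exact_unitsMap_divisorHom R K)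
  refine ⟨Γ, hfree, hcompl.inf_eq_bot, fun x ↦ ?_⟩
  obtain ⟨ω, hω, γ, hγ, h⟩ := Subgroup.mem_sup.1 (hcompl.sup_eq_top ▸ Subgroup.mem_top x)
  exact ⟨ω, hω, γ, hγ, h.symm⟩

/-- Let `K` be a number field and `μ` the group of roots of unity in `K`, i.e. the torsion
subgroup of `Kˣ`.  Then there is a free abelian subgroup `Γ` of `Kˣ` with `μ ∩ Γ = {1}`
such that every element of `Kˣ` is a product of an element of `μ` and an element of `Γ`;
equivalently `Kˣ = μ × Γ`. -/
theorem stmt17 (K : Type*) [Field K] [NumberField K] :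
    ∃ Γ : Subgroup Kˣ, Module.Free ℤ (Additive Γ) ∧
      CommGroup.torsion Kˣ ⊓ Γ = ⊥ ∧
      ∀ x : Kˣ, ∃ ω ∈ CommGroup.torsion Kˣ, ∃ γ ∈ Γ, x = ω * γ :=
  have : Module.Free ℤ (Additive ((NumberField.RingOfIntegers K)ˣ ⧸ CommGroup.torsion _)) :=
    .of_basis (NumberField.Units.basisModTorsion K)
  stmt17_general (NumberField.RingOfIntegers K) K
end
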